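/- Let f be a deep linear fully connected network of depth d and width n. For fixed inputs x_1, x_2, x_3, x_4 ∈ ℝ^{d_0}, consider C = E_θ[ Σ_{μ,ν} (∂²f(x_1)/∂θ_μ∂θ_ν)(∂f(x_2)/∂θ_μ)(∂f(x_3)/∂θ_ν) f(x_4) ], where μ, ν each run over all parameter entries. Then there exists a constant K, independent of n, such that |C| ≤ K / n for all n ≥ 1. -/

import Mathlib

open MeasureTheory ProbabilityTheory

namespace DeepLinearFC

/-- Parameter index type for a deep linear fully connected network of depth `d` and width `n`
on inputs in `ℝ^{d0}`: the readout vector `v` (`Fin n`), the first-layer matrix `W^(1)`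
(`Fin n × Fin d0`), and the higher-layer matrices `W^(2), …, W^(d)`
(`Fin (d-1) × Fin n × Fin n`). -/
abbrev Param (d0 d n : ℕ) : Type :=
  Fin n ⊕ (Fin n × Fin d0) ⊕ (Fin (d - 1) × Fin n × Fin n)

/-- Hidden activations: `hidden d0 d n θ x ℓ` is `W^(ℓ+1) ⋯ W^(2) W^(1) x`. -/
def hidden (d0 d n : ℕ) (θ : Param d0 d n → ℝ) (x : Fin d0 → ℝ) : ℕ → Fin n → ℝ
  | 0 => fun i => ∑ j : Fin d0, θ (.inr (.inl (i, j))) * x j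
  | ℓ + 1 => fun i => ∑ j : Fin n,
      (if h : ℓ < d - 1 then θ (.inr (.inr (⟨ℓ, h⟩, i, j))) else 0) * hidden d0 d n θ x ℓ j

/-- The deep linear fully connected network
`f(x) = n^{-d/2} d0^{-1/2} vᵀ W^(d) ⋯ W^(2) W^(1) x`. -/
noncomputable def net (d0 d n : ℕ) (θ : Param d0 d n → ℝ) (x : Fin d0 → ℝ) : ℝ :=
  (Real.sqrt ((n : ℝ) ^ d * (d0 : ℝ)))⁻¹ *
    ∑ i : Fin n, θ (.inl i) * hidden d0 d n θ x (d - 1) i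

/-- All parameters are i.i.d. standard Gaussians. -/
noncomputable def gaussParam (d0 d n : ℕ) : Measure (Param d0 d n → ℝ) :=
  Measure.pi fun _ => gaussianReal 0 1

/-- The neural tangent kernel `Θ(x,x') = Σ_μ ∂f(x)/∂θ_μ ⬝ ∂f(x')/∂θ_μ`. -/
noncomputable def NTK (d0 d n : ℕ) (θ : Param d0 d n → ℝ) (x x' : Fin d0 → ℝ) : ℝ :=
  ∑ μ : Param d0 d n,
    fderiv ℝ (fun θ' => net d0 d n θ' x) θ (Pi.single μ 1) *
    fderiv ℝ (fun θ' => net d0 d n θ' x') θ (Pi.single μ 1)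

/-- The correlation function
`C = E_θ[ Σ_{μ,ν} ∂²f(x₁)/∂θ_μ∂θ_ν ⬝ ∂f(x₂)/∂θ_μ ⬝ ∂f(x₃)/∂θ_ν ⬝ f(x₄) ]`. -/
noncomputable def corrDTheta (d0 d n : ℕ) (x₁ x₂ x₃ x₄ : Fin d0 → ℝ) : ℝ :=
  ∫ θ, (∑ μ : Param d0 d n, ∑ ν : Param d0 d n,
      iteratedFDeriv ℝ 2 (fun θ' => net d0 d n θ' x₁) θ ![Pi.single μ 1, Pi.single ν 1] *
        fderiv ℝ (fun θ' => net d0 d n θ' x₂) θ (Pi.single μ 1) *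
        fderiv ℝ (fun θ' => net d0 d n θ' x₃) θ (Pi.single ν 1) *
        net d0 d n θ x₄) ∂(gaussParam d0 d n)

/-!
The network is linear in the parameters of each layer, so `∂²f/∂θ_μ∂θ_ν` is nonzero only for `μ`,
`ν` in distinct layers `a`, `b`, and in expectation contracting it with `∂f/∂θ_μ` and `∂f/∂θ_ν`
amounts to replacing the weights of layer `a` in the first two of the four factors by one
independent Gaussian copy, and those of layer `b` in the first and third factors by another. This
leaves fourth moments of networks that share some layers and have others independent, and by
Isserlis' theorem these are computed layer by layer: the moments of each layer are a combination
of the three pairings of the four factors, and the next layer transfers the coefficient of a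
pairing with weight `n²` to itself and with weight at most `n` to the other two pairings. The
normalization absorbs a factor `n²` per layer. A pairing matching factors that use different
copies of some layer has coefficient `0` at that layer, and thereafter loses a factor `n` against
the trivial bound. Every pairing meets this obstruction: `(01)(23)` in layer `b`, the other two in
layer `a`.
-/

open scoped Nat ENNReal

section ProductMeasure

variable {ι κ X : Type*} [Fintype ι] [Fintype κ] [MeasurableSpace X]
  (μ : Measure X) [IsProbabilityMeasure μ]

theorem measurePreserving_pi_comp_injective {g : κ → ι} (hg : Function.Injective g) :
    MeasurePreserving (fun (z : ι → X) k => z (g k))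
      (Measure.pi fun _ => μ) (Measure.pi fun _ => μ) where
  measurable := by fun_prop
  map_eq := by
    have indep : iIndepFun (fun k (z : ι → X) => z (g k)) (Measure.pi fun _ => μ) :=
      (iIndepFun_pi (X := fun _ x => x) fun _ => aemeasurable_id).precomp hg
    rw [(iIndepFun_iff_map_fun_eq_pi_map fun k => (measurable_pi_apply _).aemeasurable).1 indep]
    simp only [(measurePreserving_eval (fun _ => μ) _).map_eq]

theorem measurePreserving_pi_prod_comp_injective {ι' : Type*} [Fintype ι'] {g : κ → ι ⊕ ι'}
    (hg : Function.Injective g) :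
    MeasurePreserving (fun (w : (ι → X) × (ι' → X)) k => Sum.elim w.1 w.2 (g k))
      ((Measure.pi fun _ => μ).prod (Measure.pi fun _ => μ)) (Measure.pi fun _ => μ) :=
  (measurePreserving_pi_comp_injective μ hg).comp
    (measurePreserving_sumPiEquivProdPi_symm fun _ => μ)

theorem integral_comp_measurePreserving {Ω Ω' E : Type*} [MeasurableSpace Ω] [MeasurableSpace Ω']
    [NormedAddCommGroup E] [NormedSpace ℝ E] {μ : Measure Ω} {ν : Measure Ω'} {T : Ω' → Ω}
    {F : Ω → E} (hT : MeasurePreserving T ν μ)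
    (hF : AEStronglyMeasurable F μ) : ∫ z, F (T z) ∂ν = ∫ z, F z ∂μ := by
  rw [← hT.map_eq, integral_map hT.aemeasurable (hT.map_eq.symm ▸ hF)]

theorem integral_mul_of_dependsOn_disjoint {S T : Set ι} {P Q : (ι → X) → ℝ}
    (hP : DependsOn P S) (hQ : DependsOn Q T) (hST : Disjoint S T)
    (hPQ : AEStronglyMeasurable (fun z => P z * Q z) (Measure.pi fun _ => μ)) :
    ∫ z, P z * Q z ∂(Measure.pi fun _ => μ) =
      (∫ z, P z ∂(Measure.pi fun _ => μ)) * ∫ z, Q z ∂(Measure.pi fun _ => μ) := by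
  classical
  let g : ι → ι ⊕ ι := fun i => if i ∈ S then .inl i else .inr i
  have hg : Function.Injective g := fun i j hij => by grind
  have mp := measurePreserving_pi_prod_comp_injective μ hg
  rw [← integral_comp_measurePreserving mp hPQ, ← integral_prod_mul]
  congr with w
  congr 1
  · exact hP fun i hi => by simp [g, hi]
  · exact hQ fun i hi => by simp [g, hST.notMem_of_mem_right hi]

end ProductMeasure

section FiniteMoments

variable {Ω : Type*} [MeasurableSpace Ω] {μ : Measure Ω} {F G : Ω → ℝ}

/-- `F` belongs to every `L^p` with `p < ∞`. -/
def HasFiniteMoments (F : Ω → ℝ) (μ : Measure Ω) : Prop :=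
  ∀ p : ℝ≥0∞, p ≠ ∞ → MemLp F p μ

namespace HasFiniteMoments

theorem integrable (hF : HasFiniteMoments F μ) : Integrable F μ :=
  memLp_one_iff_integrable.1 (hF 1 ENNReal.one_ne_top)

theorem aestronglyMeasurable (hF : HasFiniteMoments F μ) : AEStronglyMeasurable F μ :=
  hF.integrable.aestronglyMeasurable

theorem const [IsFiniteMeasure μ] (c : ℝ) : HasFiniteMoments (fun _ => c) μ :=
  fun _ _ => memLp_const c

theorem mul (hF : HasFiniteMoments F μ) (hG : HasFiniteMoments G μ) :
    HasFiniteMoments (fun z => F z * G z) μ := fun p hp => by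
  have : ENNReal.HolderTriple (2 * p) (2 * p) p := ⟨by
    rw [ENNReal.mul_inv (by simp) (by simp), ← add_mul, ENNReal.inv_two_add_inv_two, one_mul]⟩
  have htop : 2 * p ≠ ∞ := ENNReal.mul_ne_top (by simp) hp
  exact (hG (2 * p) htop).mul' (hF (2 * p) htop)

theorem sum {ι : Type*} {s : Finset ι} {F : ι → Ω → ℝ} (hF : ∀ i ∈ s, HasFiniteMoments (F i) μ) :
    HasFiniteMoments (fun z => ∑ i ∈ s, F i z) μ :=
  fun p hp => memLp_finsetSum s fun i hi => hF i hi p hp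

theorem prod [IsFiniteMeasure μ] {ι : Type*} {s : Finset ι} {F : ι → Ω → ℝ}
    (hF : ∀ i ∈ s, HasFiniteMoments (F i) μ) :
    HasFiniteMoments (fun z => ∏ i ∈ s, F i z) μ := by
  rw [← Finset.prod_fn]
  exact Finset.prod_induction F (HasFiniteMoments · μ) (fun _ _ => mul) (const 1) hF

theorem comp_measurePreserving {Ω' : Type*} [MeasurableSpace Ω'] {ν : Measure Ω'} {T : Ω' → Ω}
    (hF : HasFiniteMoments F μ) (hT : MeasurePreserving T ν μ) :
    HasFiniteMoments (fun z => F (T z)) ν :=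
  fun p hp => (hF p hp).comp_measurePreserving hT

end HasFiniteMoments

end FiniteMoments

/-- The law of i.i.d. standard Gaussian variables indexed by `κ`. -/
noncomputable abbrev gaussianPi (κ : Type*) [Fintype κ] : Measure (κ → ℝ) :=
  Measure.pi fun _ => gaussianReal 0 1

theorem HasFiniteMoments.coord {κ : Type*} [Fintype κ] (k : κ) :
    HasFiniteMoments (fun z => z k) (gaussianPi κ) :=
  fun p hp => (memLp_id_gaussianReal' p hp).comp_measurePreserving (measurePreserving_eval _ k)

theorem integral_Ioi_pow_two_mul_mul_exp (k : ℕ) :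
    ∫ x in Set.Ioi (0 : ℝ), x ^ (2 * k) * Real.exp (-x ^ 2 / 2) =
      (2 * k - 1)‼ * √(2 * Real.pi) / 2 := by
  have exponent : -(((2 * k : ℕ) : ℝ) + 1) / 2 = -(k + 1 / 2) := by push_cast; ring
  have argument : (((2 * k : ℕ) : ℝ) + 1) / 2 = k + 1 / 2 := by push_cast; ring
  have h := integral_rpow_mul_exp_neg_mul_rpow (p := 2) (q := (2 * k : ℕ)) (b := 2⁻¹)
    two_pos (neg_one_lt_zero.trans_le (Nat.cast_nonneg _)) (by norm_num)
  rw [exponent, argument, Real.Gamma_nat_add_half, Real.inv_rpow zero_le_two,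
    Real.rpow_neg zero_le_two, inv_inv, Real.rpow_add two_pos, Real.rpow_natCast,
    ← Real.sqrt_eq_rpow] at h
  simp only [Real.rpow_natCast, Real.rpow_two] at h
  calc ∫ x in Set.Ioi (0 : ℝ), x ^ (2 * k) * Real.exp (-x ^ 2 / 2)
    _ = ∫ x in Set.Ioi (0 : ℝ), x ^ (2 * k) * Real.exp (-2⁻¹ * x ^ 2) := by
        simp only [neg_mul, mul_neg, div_eq_inv_mul]
    _ = (2 * k - 1)‼ * √(2 * Real.pi) / 2 := by
        rw [h, Real.sqrt_mul zero_le_two]; field_simp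

theorem integral_pow_two_mul_gaussianReal (k : ℕ) :
    ∫ x, x ^ (2 * k) ∂gaussianReal 0 1 = (2 * k - 1)‼ := by
  have hsqrt : √(2 * Real.pi) ≠ 0 := by positivity
  calc ∫ x, x ^ (2 * k) ∂gaussianReal 0 1
    _ = (√(2 * Real.pi))⁻¹ * ∫ x : ℝ, |x| ^ (2 * k) * Real.exp (-|x| ^ 2 / 2) := by
        rw [integral_gaussianReal_eq_integral_smul one_ne_zero, ← integral_const_mul]
        congr with x
        simp only [gaussianPDFReal, sub_zero, NNReal.coe_one, mul_one, smul_eq_mul,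
          (even_two_mul k).pow_abs, sq_abs]
        ring
    _ = (2 * k - 1)‼ := by
        rw [integral_comp_abs (f := fun x => x ^ (2 * k) * Real.exp (-x ^ 2 / 2)),
          integral_Ioi_pow_two_mul_mul_exp]
        field_simp

theorem integral_pow_gaussianReal_of_odd {k : ℕ} (hk : Odd k) :
    ∫ x, x ^ k ∂gaussianReal 0 1 = 0 := by
  have neg_eq : ∫ x, x ^ k ∂gaussianReal 0 1 = -∫ x, x ^ k ∂gaussianReal 0 1 := by
    conv_lhs => rw [← neg_zero (G := ℝ), ← gaussianReal_map_neg,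
      integral_map (by fun_prop) (by fun_prop)]
    simp only [hk.neg_pow, integral_neg]
  linarith

/-- The partner of slot `k` in the `π`-th of the pairings `(01)(23)`, `(02)(13)`, `(03)(12)`. -/
def partner (π : Fin 3) (k : Fin 4) : Fin 4 :=
  ![![1, 0, 3, 2], ![2, 3, 0, 1], ![3, 2, 1, 0]] π k

/-- The tuple `i` takes equal values on slots matched by the `π`-th pairing of the four slots. -/
def IsPaired {ι : Type*} (π : Fin 3) (i : Fin 4 → ι) : Prop :=
  ∀ k, i (partner π k) = i k

instance {ι : Type*} [DecidableEq ι] (π : Fin 3) (i : Fin 4 → ι) : Decidable (IsPaired π i) :=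
  inferInstanceAs (Decidable (∀ k, i (partner π k) = i k))

section Isserlis

variable {ι κ : Type*}

theorem isPaired_comp_iff {f : ι → κ} (hf : Function.Injective f) {π : Fin 3} {i : Fin 4 → ι} :
    IsPaired π (fun k => f (i k)) ↔ IsPaired π i :=
  forall_congr' fun _ => hf.eq_iff

theorem prod_doubleFactorial_card_fiber : ∀ p : Fin 4 → Fin 4,
    (∏ q, if Even (Finset.univ.filter (p · = q)).card then
      ((Finset.univ.filter (p · = q)).card - 1)‼ else 0) =
      (Finset.univ.filter (IsPaired · p)).card := by
  decide +kernel

theorem integral_pow_gaussianReal (k : ℕ) :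
    ∫ x, x ^ k ∂gaussianReal 0 1 = ((if Even k then (k - 1)‼ else 0 : ℕ) : ℝ) := by
  split_ifs with hk
  · obtain ⟨m, rfl⟩ := hk
    rw [← two_mul, integral_pow_two_mul_gaussianReal]
  · rw [integral_pow_gaussianReal_of_odd (Nat.not_even_iff_odd.1 hk), Nat.cast_zero]

theorem integral_prod_pow_gaussianPi [Fintype κ] (c : κ → ℕ) :
    ∫ z, ∏ q, z q ^ c q ∂gaussianPi κ = ∏ q, ∫ x, x ^ c q ∂gaussianReal 0 1 :=
  integral_fintype_prod_eq_prod fun q x => x ^ c q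

theorem integral_prod_gaussianPi_fin_four (p : Fin 4 → Fin 4) :
    ∫ z, ∏ k, z (p k) ∂gaussianPi (Fin 4) = (Finset.univ.filter (IsPaired · p)).card := by
  have group_by_value (z : Fin 4 → ℝ) :
      ∏ k, z (p k) = ∏ q, z q ^ (Finset.univ.filter (p · = q)).card := by
    simp only [← Finset.prod_fiberwise' Finset.univ p z, Finset.prod_const]
  simp only [group_by_value, integral_prod_pow_gaussianPi, integral_pow_gaussianReal]
  rw [← prod_doubleFactorial_card_fiber, Nat.cast_prod]

/-- Only the coincidences among the indices matter, so that they can be relabelled by `Fin 4`. -/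
theorem integral_prod_gaussianPi [Fintype κ] [DecidableEq κ] (p : Fin 4 → κ) :
    ∫ z, ∏ k, z (p k) ∂gaussianPi κ = (Finset.univ.filter (IsPaired · p)).card := by
  let s := Finset.univ.image p
  let p' : Fin 4 → s := fun k => ⟨p k, by simp [s]⟩
  obtain ⟨e⟩ : Nonempty (s ↪ Fin 4) := Function.Embedding.nonempty_of_card_le (by
    simpa using Finset.card_image_le (s := Finset.univ) (f := p))
  have measurable : AEStronglyMeasurable (fun z => ∏ k, z (p' k)) (gaussianPi s) :=
    (HasFiniteMoments.prod fun k _ => .coord (p' k)).aestronglyMeasurable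
  calc ∫ z, ∏ k, z (p k) ∂gaussianPi κ
    _ = ∫ z, ∏ k, z (p' k) ∂gaussianPi s :=
        integral_comp_measurePreserving
          (measurePreserving_pi_comp_injective _ Subtype.val_injective) measurable
    _ = ∫ z, ∏ k, z (e (p' k)) ∂gaussianPi (Fin 4) :=
        (integral_comp_measurePreserving
          (measurePreserving_pi_comp_injective _ e.injective) measurable).symm
    _ = (Finset.univ.filter (IsPaired · p)).card := by
        simp only [integral_prod_gaussianPi_fin_four, isPaired_comp_iff e.injective]
        simp only [← isPaired_comp_iff Subtype.val_injective, p']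

end Isserlis

theorem integral_prod_sum_mul_gaussianPi {κ J : Type*} [Fintype κ] [DecidableEq κ] [Fintype J]
    {S T : Set κ} (hST : Disjoint S T) {e : Fin 4 → J → κ} (he : ∀ k j, e k j ∈ S)
    {h : Fin 4 → J → (κ → ℝ) → ℝ} (hh : ∀ k j, DependsOn (h k j) T)
    (hm : ∀ k j, HasFiniteMoments (h k j) (gaussianPi κ)) :
    ∫ z, ∏ k, ∑ j, z (e k j) * h k j z ∂gaussianPi κ =
      ∑ j : Fin 4 → J, (Finset.univ.filter (IsPaired · fun k => e k (j k))).card *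
        ∫ z, ∏ k, h k (j k) z ∂gaussianPi κ := by
  classical
  have moments_weights (j : Fin 4 → J) :
      HasFiniteMoments (fun z => ∏ k, z (e k (j k))) (gaussianPi κ) := .prod fun k _ => .coord _
  have moments_rest (j : Fin 4 → J) :
      HasFiniteMoments (fun z => ∏ k, h k (j k) z) (gaussianPi κ) := .prod fun k _ => hm k (j k)
  simp only [Finset.prod_univ_sum, Fintype.piFinset_univ, Finset.prod_mul_distrib]
  rw [integral_finsetSum _ fun j _ => ((moments_weights j).mul (moments_rest j)).integrable]
  refine Finset.sum_congr rfl fun j _ => ?_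
  rw [integral_mul_of_dependsOn_disjoint _ _ _ hST
    ((moments_weights j).mul (moments_rest j)).aestronglyMeasurable, integral_prod_gaussianPi]
  · exact fun z w hzw => Finset.prod_congr rfl fun k _ => hzw _ (he k (j k))
  · exact fun z w hzw => Finset.prod_congr rfl fun k _ => hh k (j k) hzw

section Multilinear

variable {P L : Type*} [DecidableEq L] {layer : P → L} {s t : Finset L} {F G : (P → ℝ) → ℝ}

/-- The parameter vector `θ` with the parameters of layer `a` replaced by those of `ω`. -/
def replaceLayer (layer : P → L) (a : L) (ω θ : P → ℝ) : P → ℝ :=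
  fun p => if layer p = a then ω p else θ p

theorem replaceLayer_self (a : L) (θ : P → ℝ) : replaceLayer layer a θ θ = θ :=
  funext fun _ => ite_self _

theorem replaceLayer_comm {a b : L} (hab : a ≠ b) (ω ω' θ : P → ℝ) :
    replaceLayer layer a ω (replaceLayer layer b ω' θ) =
      replaceLayer layer b ω' (replaceLayer layer a ω θ) := by
  funext p
  unfold replaceLayer
  grind

/-- `F` is a function of the parameters in the layers of `s`, linear in each of these layers. -/
structure IsMultilinearOn (layer : P → L) (s : Finset L) (F : (P → ℝ) → ℝ) : Prop where
  dependsOn : DependsOn F (layer ⁻¹' s)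
  isLinearMap : ∀ a ∈ s, ∀ θ, IsLinearMap ℝ fun ω => F (replaceLayer layer a ω θ)

namespace IsMultilinearOn

theorem const (c : ℝ) : IsMultilinearOn layer ∅ fun _ => c where
  dependsOn := fun _ _ _ => rfl
  isLinearMap := by simp

theorem coord (p : P) : IsMultilinearOn layer {layer p} fun θ => θ p where
  dependsOn := fun _ _ h => h p (by simp)
  isLinearMap := by
    simp only [Finset.mem_singleton, forall_eq, replaceLayer, if_true]
    exact fun _ => ⟨fun _ _ => rfl, fun _ _ => rfl⟩

theorem sum {ι : Type*} {u : Finset ι} {F : ι → (P → ℝ) → ℝ}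
    (hF : ∀ i ∈ u, IsMultilinearOn layer s (F i)) :
    IsMultilinearOn layer s fun θ => ∑ i ∈ u, F i θ where
  dependsOn := fun _ _ h => Finset.sum_congr rfl fun i hi => (hF i hi).dependsOn h
  isLinearMap := fun a ha θ =>
    { map_add := fun ω ω' => by
        rw [← Finset.sum_add_distrib]
        exact Finset.sum_congr rfl fun i hi => ((hF i hi).isLinearMap a ha θ).map_add ω ω'
      map_smul := fun c ω => by
        rw [Finset.smul_sum]
        exact Finset.sum_congr rfl fun i hi => ((hF i hi).isLinearMap a ha θ).map_smul c ω }

theorem replaceLayer_of_notMem (hF : IsMultilinearOn layer s F) {a : L} (ha : a ∉ s)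
    (ω θ : P → ℝ) : F (replaceLayer layer a ω θ) = F θ :=
  hF.dependsOn fun _ hp => if_neg fun h => ha (by simpa [h] using hp)

theorem mul (hF : IsMultilinearOn layer s F) (hG : IsMultilinearOn layer t G)
    (hst : Disjoint s t) : IsMultilinearOn layer (s ∪ t) fun θ => F θ * G θ where
  dependsOn := fun _ _ h => congrArg₂ (· * ·)
    (hF.dependsOn fun p hp => h p (Finset.mem_union_left t hp))
    (hG.dependsOn fun p hp => h p (Finset.mem_union_right s hp))
  isLinearMap := fun a ha θ => by
    rcases Finset.mem_union.1 ha with ha | ha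
    · simp only [hG.replaceLayer_of_notMem (Finset.disjoint_left.1 hst ha)]
      exact (LinearMap.mulRight ℝ (G θ) ∘ₗ (hF.isLinearMap a ha θ).mk').isLinear
    · simp only [hF.replaceLayer_of_notMem (Finset.disjoint_right.1 hst ha)]
      exact (LinearMap.mulLeft ℝ (F θ) ∘ₗ (hG.isLinearMap a ha θ).mk').isLinear

theorem sum_coord_mul {J : Type*} [Fintype J] {l : L} (hl : l ∉ s) {w : J → P}
    (hlayer : ∀ j, layer (w j) = l) {g : J → (P → ℝ) → ℝ}
    (hg : ∀ j, IsMultilinearOn layer s (g j)) :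
    IsMultilinearOn layer (insert l s) fun θ => ∑ j, θ (w j) * g j θ :=
  .sum fun j _ => hlayer j ▸ (coord (w j)).mul (hg j)
    (Finset.disjoint_singleton_left.2 (hlayer j ▸ hl))

theorem comp_replaceLayer (hF : IsMultilinearOn layer s F) (b : L) (ω : P → ℝ) :
    IsMultilinearOn layer (s.erase b) fun θ => F (replaceLayer layer b ω θ) where
  dependsOn := fun θ θ' h => hF.dependsOn fun p hp => by
    by_cases hb : layer p = b
    · simp [replaceLayer, hb]
    · simpa [replaceLayer, hb] using h p (Finset.mem_erase.2 ⟨hb, hp⟩)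
  isLinearMap := fun a ha θ => by
    simp only [← replaceLayer_comm (Finset.ne_of_mem_erase ha)]
    exact hF.isLinearMap a (Finset.mem_of_mem_erase ha) _

theorem apply_replaceLayer_eq_sum [Fintype P] [DecidableEq P] (hF : IsMultilinearOn layer s F)
    {a : L} (ha : a ∈ s) (ω θ : P → ℝ) :
    F (replaceLayer layer a ω θ) =
      ∑ μ, ω μ * F (replaceLayer layer a (Pi.single μ 1) θ) := by
  simpa [← Pi.single_apply, Pi.single_comm] using
    (hF.isLinearMap a ha θ).mk'.pi_apply_eq_sum_univ ω

theorem apply_replaceLayer_single_of_ne [DecidableEq P] (hF : IsMultilinearOn layer s F)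
    {a : L} (ha : a ∈ s) {μ : P} (hμ : layer μ ≠ a) (θ : P → ℝ) :
    F (replaceLayer layer a (Pi.single μ 1) θ) = 0 := by
  have eq_zero : replaceLayer layer a (Pi.single μ 1) θ = replaceLayer layer a 0 θ := by
    funext p
    by_cases hp : layer p = a
    · simp [replaceLayer, hp, Pi.single_eq_of_ne (ne_of_apply_ne layer (hp.trans_ne hμ.symm))]
    · simp [replaceLayer, hp]
  rw [eq_zero, (hF.isLinearMap a ha θ).map_zero]

theorem induction_on [Fintype P] {motive : ((P → ℝ) → ℝ) → Prop}
    (hF : IsMultilinearOn layer s F) (const : ∀ c, motive fun _ => c)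
    (sum_coord_mul : ∀ G : P → (P → ℝ) → ℝ, (∀ μ, motive (G μ)) →
      motive fun θ => ∑ μ, θ μ * G μ θ) : motive F := by
  classical
  induction s using Finset.induction_on generalizing F with
  | empty =>
    rw [show F = fun _ => F 0 from funext fun _ => hF.dependsOn (by simp)]
    exact const _
  | insert a s has ih =>
    rw [show F = fun θ => ∑ μ, θ μ * F (replaceLayer layer a (Pi.single μ 1) θ) from
      funext fun θ => by
        rw [← hF.apply_replaceLayer_eq_sum (s.mem_insert_self a), replaceLayer_self]]
    exact sum_coord_mul _ fun μ => ih (Finset.erase_insert has ▸ hF.comp_replaceLayer a _)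

theorem contDiff [Fintype P] (hF : IsMultilinearOn layer s F) {m : WithTop ℕ∞} :
    ContDiff ℝ m F :=
  hF.induction_on (fun _ => contDiff_const) fun _ hG =>
    ContDiff.sum fun μ _ => (contDiff_apply ℝ ℝ μ).mul (hG μ)

theorem hasFiniteMoments [Fintype P] (hF : IsMultilinearOn layer s F) :
    HasFiniteMoments F (gaussianPi P) :=
  hF.induction_on (motive := (HasFiniteMoments · (gaussianPi P))) HasFiniteMoments.const
    fun _ hG => .sum fun μ _ => (HasFiniteMoments.coord μ).mul (hG μ)

theorem fderiv_single [Finite P] [DecidableEq P] (hF : IsMultilinearOn layer s F)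
    (θ : P → ℝ) (μ : P) :
    fderiv ℝ F θ (Pi.single μ 1) =
      if layer μ ∈ s then F (replaceLayer layer (layer μ) (Pi.single μ 1) θ) else 0 := by
  have := Fintype.ofFinite P
  rw [← (hF.contDiff.differentiable one_ne_zero θ).lineDeriv_eq_fderiv]
  have add_single (t : ℝ) : θ + t • Pi.single μ 1 =
      replaceLayer layer (layer μ) (θ + t • Pi.single μ 1) θ := by
    funext p
    by_cases hp : layer p = layer μ
    · simp [replaceLayer, hp]
    · simp [replaceLayer, hp, Pi.single_eq_of_ne (ne_of_apply_ne layer hp)]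
  split_ifs with hμ
  · have affine (t : ℝ) : F (θ + t • Pi.single μ 1) =
        F θ + t * F (replaceLayer layer (layer μ) (Pi.single μ 1) θ) := by
      have linear := hF.isLinearMap _ hμ θ
      rw [add_single, linear.map_add, linear.map_smul, replaceLayer_self, smul_eq_mul]
    simp [lineDeriv, affine]
  · have constant (t : ℝ) : F (θ + t • Pi.single μ 1) = F θ := by
      rw [add_single, hF.replaceLayer_of_notMem hμ]
    simp [lineDeriv, constant]

theorem iteratedFDeriv_two_single [Fintype P] [DecidableEq P] (hF : IsMultilinearOn layer s F)
    (θ : P → ℝ) (μ ν : P) :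
    iteratedFDeriv ℝ 2 F θ ![Pi.single μ 1, Pi.single ν 1] =
      if (layer μ, layer ν) ∈ s.offDiag then
        F (replaceLayer layer (layer ν) (Pi.single ν 1)
          (replaceLayer layer (layer μ) (Pi.single μ 1) θ))
      else 0 := by
  have differentiable : DifferentiableAt ℝ (fderiv ℝ F) θ :=
    (hF.contDiff.fderiv_right (m := 1) le_rfl).differentiable one_ne_zero θ
  calc iteratedFDeriv ℝ 2 F θ ![Pi.single μ 1, Pi.single ν 1]
    _ = fderiv ℝ (fun θ => fderiv ℝ F θ (Pi.single ν 1)) θ (Pi.single μ 1) := by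
        simp [iteratedFDeriv_two_apply, fderiv_clm_apply differentiable]
    _ = _ := by
        simp only [hF.fderiv_single]
        by_cases hν : layer ν ∈ s
        · simp only [hν, if_true, (hF.comp_replaceLayer _ _).fderiv_single, Finset.mem_erase,
            Finset.mem_offDiag]
          grind
        · simp [hν]

end IsMultilinearOn

end Multilinear

section Copies

variable {P L C : Type*} {layer : P → L}

/-- From copies `z (c, ·)` of the parameter vector, indexed by `c : C`, the one whose layer `l` is
taken from the copy `B l`. -/
def mixCopies (layer : P → L) (B : L → C) (z : C × P → ℝ) : P → ℝ :=
  fun p => z (B (layer p), p)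

theorem measurePreserving_mixCopies [Fintype P] [Fintype C] (B : L → C) :
    MeasurePreserving (mixCopies layer B) (gaussianPi (C × P)) (gaussianPi P) :=
  measurePreserving_pi_comp_injective _ fun _ _ h => (Prod.ext_iff.1 h).2

variable [DecidableEq L]

theorem mixCopies_update (B : L → C) (a : L) (c : C) (z : C × P → ℝ) :
    mixCopies layer (Function.update B a c) z =
      replaceLayer layer a (fun p => z (c, p)) (mixCopies layer B z) := by
  funext p
  by_cases hp : layer p = a <;> simp [mixCopies, replaceLayer, hp]

/-- The copies entering the four factors of the correlator for the pair of layers `(a, b)`: copy `1`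
contracts the two derivatives in layer `a`, copy `2` those in layer `b`. -/
def copyPattern (a b : L) : Fin 4 → L → Fin 3 :=
  ![Function.update (Function.update 0 a 1) b 2, Function.update 0 a 1, Function.update 0 b 2, 0]

theorem exists_not_isPaired_copyPattern {s : Finset L} {a b : L} (hab : (a, b) ∈ s.offDiag)
    (π : Fin 3) : ∃ l ∈ s, ¬ IsPaired π fun k => copyPattern a b k l := by
  obtain ⟨ha, hb, hne⟩ := Finset.mem_offDiag.1 hab
  have broken_at_b : ¬ IsPaired 0 fun k => copyPattern a b k b := fun h => by
    simpa [copyPattern, partner, hne.symm] using h 0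
  have broken_at_a : ∀ π ≠ 0, ¬ IsPaired π fun k => copyPattern a b k a := fun π hπ h => by
    have := h 0
    fin_cases π <;> simp_all [copyPattern, partner]
  exact if hπ : π = 0 then ⟨b, hb, hπ ▸ broken_at_b⟩ else ⟨a, ha, broken_at_a π hπ⟩

end Copies

section Contraction

variable {P L : Type*} {layer : P → L} {s : Finset L}

theorem isPaired_two_copies_iff {π : Fin 3} {μ μ' ν ν' : P} :
    IsPaired π ![((1 : Fin 3), μ), (1, μ'), (2, ν), (2, ν')] ↔ π = 0 ∧ μ = μ' ∧ ν = ν' := by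
  fin_cases π <;> simp [IsPaired, partner, Fin.forall_fin_succ, eq_comm]

variable [Fintype P] [DecidableEq P]

theorem integral_two_copies_mul {Q : (P → ℝ) → ℝ} (hQ : HasFiniteMoments Q (gaussianPi P))
    (μ μ' ν ν' : P) :
    ∫ z : Fin 3 × P → ℝ, z (1, μ) * z (1, μ') * z (2, ν) * z (2, ν') *
      Q (mixCopies layer 0 z) ∂gaussianPi (Fin 3 × P) =
        if μ = μ' ∧ ν = ν' then ∫ θ, Q θ ∂gaussianPi P else 0 := by
  let p : Fin 4 → Fin 3 × P := ![(1, μ), (1, μ'), (2, ν), (2, ν')]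
  have four_coords (z : Fin 3 × P → ℝ) :
      z (1, μ) * z (1, μ') * z (2, ν) * z (2, ν') = ∏ k, z (p k) := by
    simp [Fin.prod_univ_four, p]
  have hp : ∀ k, p k ∈ {q : Fin 3 × P | q.1 = 0}ᶜ := by simp [Fin.forall_fin_succ, p]
  have weights_dependsOn : DependsOn (fun z : Fin 3 × P → ℝ => ∏ k, z (p k)) {q | q.1 = 0}ᶜ :=
    fun z w h => Finset.prod_congr rfl fun k _ => h _ (hp k)
  have rest_dependsOn : DependsOn (fun z => Q (mixCopies layer 0 z)) {q : Fin 3 × P | q.1 = 0} :=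
    fun z w h => congrArg Q (funext fun q => h _ rfl)
  have mp := measurePreserving_mixCopies (layer := layer) (0 : L → Fin 3)
  have moments : HasFiniteMoments (fun z => (∏ k, z (p k)) * Q (mixCopies layer 0 z))
      (gaussianPi (Fin 3 × P)) :=
    (HasFiniteMoments.prod fun k _ => .coord (p k)).mul (hQ.comp_measurePreserving mp)
  have card : (Finset.univ.filter (IsPaired · p)).card = if μ = μ' ∧ ν = ν' then 1 else 0 := by
    split_ifs with h <;> simp [p, isPaired_two_copies_iff, h, Finset.filter_eq']
  simp only [four_coords]
  rw [integral_mul_of_dependsOn_disjoint _ weights_dependsOn rest_dependsOn disjoint_compl_left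
    moments.aestronglyMeasurable, integral_prod_gaussianPi, card,
    integral_comp_measurePreserving mp hQ.aestronglyMeasurable]
  split_ifs <;> simp

variable [DecidableEq L]

theorem prod_mixCopies_copyPattern_eq_sum {F : Fin 4 → (P → ℝ) → ℝ}
    (hF : ∀ k, IsMultilinearOn layer s (F k)) {a b : L} (hab : (a, b) ∈ s.offDiag)
    (z : Fin 3 × P → ℝ) :
    ∏ k, F k (mixCopies layer (copyPattern a b k) z) =
      ∑ ν', ∑ μ', ∑ ν, ∑ μ, z (1, μ) * z (1, μ') * z (2, ν) * z (2, ν') *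
        (F 0 (replaceLayer layer b (Pi.single ν 1)
            (replaceLayer layer a (Pi.single μ 1) (mixCopies layer 0 z))) *
          F 1 (replaceLayer layer a (Pi.single μ' 1) (mixCopies layer 0 z)) *
          F 2 (replaceLayer layer b (Pi.single ν' 1) (mixCopies layer 0 z)) *
          F 3 (mixCopies layer 0 z)) := by
  obtain ⟨ha, hb, hne⟩ := Finset.mem_offDiag.1 hab
  have ha' : a ∈ s.erase b := Finset.mem_erase.2 ⟨hne, ha⟩
  have restrict (ν : P) := (hF 0).comp_replaceLayer b (Pi.single ν 1)
  simp only [Fin.prod_univ_four, copyPattern, Matrix.cons_val, mixCopies_update,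
    (hF _).apply_replaceLayer_eq_sum hb fun p => z (2, p),
    (hF _).apply_replaceLayer_eq_sum ha fun p => z (1, p),
    (restrict _).apply_replaceLayer_eq_sum ha' fun p => z (1, p)]
  simp only [Finset.sum_mul, Finset.mul_sum]
  congr! 4
  ring

theorem hasFiniteMoments_contraction {F : Fin 4 → (P → ℝ) → ℝ}
    (hF : ∀ k, IsMultilinearOn layer s (F k)) (a b : L) (μ ν μ' ν' : P) :
    HasFiniteMoments (fun θ =>
      F 0 (replaceLayer layer b (Pi.single ν 1) (replaceLayer layer a (Pi.single μ 1) θ)) *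
        F 1 (replaceLayer layer a (Pi.single μ' 1) θ) *
        F 2 (replaceLayer layer b (Pi.single ν' 1) θ) * F 3 θ) (gaussianPi P) :=
  (((((hF 0).comp_replaceLayer _ _).comp_replaceLayer _ _).hasFiniteMoments.mul
    ((hF 1).comp_replaceLayer _ _).hasFiniteMoments).mul
    ((hF 2).comp_replaceLayer _ _).hasFiniteMoments).mul (hF 3).hasFiniteMoments

theorem integral_prod_mixCopies_copyPattern {F : Fin 4 → (P → ℝ) → ℝ}
    (hF : ∀ k, IsMultilinearOn layer s (F k)) {a b : L} (hab : (a, b) ∈ s.offDiag) :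
    ∫ z, ∏ k, F k (mixCopies layer (copyPattern a b k) z) ∂gaussianPi (Fin 3 × P) =
      ∑ μ, ∑ ν, ∫ θ,
        F 0 (replaceLayer layer b (Pi.single ν 1) (replaceLayer layer a (Pi.single μ 1) θ)) *
          F 1 (replaceLayer layer a (Pi.single μ 1) θ) *
          F 2 (replaceLayer layer b (Pi.single ν 1) θ) * F 3 θ ∂gaussianPi P := by
  have moments := hasFiniteMoments_contraction hF a b
  have integrable (μ ν μ' ν' : P) := (HasFiniteMoments.mul (HasFiniteMoments.mul
    (.mul (.mul (.coord ((1 : Fin 3), μ)) (.coord (1, μ'))) (.coord (2, ν))) (.coord (2, ν')))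
    ((moments μ ν μ' ν').comp_measurePreserving
      (measurePreserving_mixCopies (layer := layer) (0 : L → Fin 3)))).integrable
  simp only [prod_mixCopies_copyPattern_eq_sum hF hab]
  simp (maxDischargeDepth := 8) only [integral_finsetSum, integrable, integrable_finsetSum,
    implies_true, integral_two_copies_mul (moments _ _ _ _)]
  simp only [ite_and, Finset.sum_ite_eq', Finset.mem_univ, if_true]
  exact Finset.sum_comm

theorem iteratedFDeriv_mul_fderiv_mul_fderiv_eq_sum {F₀ F₁ F₂ : (P → ℝ) → ℝ}
    (h₀ : IsMultilinearOn layer s F₀) (h₁ : IsMultilinearOn layer s F₁)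
    (h₂ : IsMultilinearOn layer s F₂) (θ : P → ℝ) (μ ν : P) :
    iteratedFDeriv ℝ 2 F₀ θ ![Pi.single μ 1, Pi.single ν 1] *
        fderiv ℝ F₁ θ (Pi.single μ 1) * fderiv ℝ F₂ θ (Pi.single ν 1) =
      ∑ ab ∈ s.offDiag,
        F₀ (replaceLayer layer ab.2 (Pi.single ν 1)
          (replaceLayer layer ab.1 (Pi.single μ 1) θ)) *
        F₁ (replaceLayer layer ab.1 (Pi.single μ 1) θ) *
        F₂ (replaceLayer layer ab.2 (Pi.single ν 1) θ) := by
  have vanish : ∀ ab ∈ s.offDiag, ab ≠ (layer μ, layer ν) →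
      F₁ (replaceLayer layer ab.1 (Pi.single μ 1) θ) *
        F₂ (replaceLayer layer ab.2 (Pi.single ν 1) θ) = 0 := fun ab hab hne => by
    obtain ⟨ha, hb, -⟩ := Finset.mem_offDiag.1 hab
    by_cases hμ : layer μ = ab.1
    · have hν : layer ν ≠ ab.2 := fun hν => hne (Prod.ext hμ.symm hν.symm)
      rw [h₂.apply_replaceLayer_single_of_ne hb hν, mul_zero]
    · rw [h₁.apply_replaceLayer_single_of_ne ha hμ, zero_mul]
  rw [h₀.iteratedFDeriv_two_single]
  split_ifs with h
  · obtain ⟨hμ, hν, -⟩ := Finset.mem_offDiag.1 h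
    rw [Finset.sum_eq_single_of_mem _ h, h₁.fderiv_single, h₂.fderiv_single, if_pos hμ, if_pos hν]
    exact fun ab hab hne => by rw [mul_assoc, vanish ab hab hne, mul_zero]
  · rw [zero_mul, zero_mul, Finset.sum_eq_zero]
    exact fun ab hab => by
      rw [mul_assoc, vanish ab hab fun hne => h (hne ▸ hab), mul_zero]

theorem integral_iteratedFDeriv_mul_fderiv_mul_fderiv {F : Fin 4 → (P → ℝ) → ℝ}
    (hF : ∀ k, IsMultilinearOn layer s (F k)) :
    ∫ θ, ∑ μ, ∑ ν, iteratedFDeriv ℝ 2 (F 0) θ ![Pi.single μ 1, Pi.single ν 1] *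
        fderiv ℝ (F 1) θ (Pi.single μ 1) * fderiv ℝ (F 2) θ (Pi.single ν 1) * F 3 θ ∂gaussianPi P =
      ∑ ab ∈ s.offDiag, ∫ z, ∏ k, F k (mixCopies layer (copyPattern ab.1 ab.2 k) z)
        ∂gaussianPi (Fin 3 × P) := by
  simp only [iteratedFDeriv_mul_fderiv_mul_fderiv_eq_sum (hF 0) (hF 1) (hF 2), Finset.sum_mul]
  have integrable (μ ν : P) (ab : L × L) :=
    (hasFiniteMoments_contraction hF ab.1 ab.2 μ ν μ ν).integrable
  simp (maxDischargeDepth := 5) only [integral_finsetSum, integrable, integrable_finsetSum,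
    implies_true]
  simp only [Finset.sum_comm (t := s.offDiag)]
  refine Finset.sum_congr rfl fun ab hab => ?_
  rw [integral_prod_mixCopies_copyPattern hF hab]

end Contraction

section PairingTensor

variable {I J C : Type*}

/-- The four-index tensor `∑ π, α π · [i is paired by π]`, the general form of the fourth moments of
a hidden layer. -/
def pairingTensor [DecidableEq I] (α : Fin 3 → ℝ) (i : Fin 4 → I) : ℝ :=
  ∑ π, if IsPaired π i then α π else 0

/-- The coefficients in the pairing tensor of the moments of a layer, where `T` is the tensor of the
moments of the previous layer and `c` tells which copy of the weights each slot uses. -/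
def layerContraction [Fintype J] [DecidableEq J] [DecidableEq C] (c : Fin 4 → C)
    (T : (Fin 4 → J) → ℝ) (π : Fin 3) : ℝ :=
  if IsPaired π c then ∑ j, if IsPaired π j then T j else 0 else 0

theorem isPaired_prod_iff {π : Fin 3} {i : Fin 4 → I} {j : Fin 4 → J} :
    IsPaired π (fun k => (i k, j k)) ↔ IsPaired π i ∧ IsPaired π j := by
  simp only [IsPaired, Prod.ext_iff, forall_and]

theorem IsPaired.ext {π : Fin 3} {i j : Fin 4 → I} (hi : IsPaired π i) (hj : IsPaired π j)
    (h₀ : i 0 = j 0) (h₁ : i (![2, 1, 1] π) = j (![2, 1, 1] π)) : i = j := by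
  have representatives : ∀ π k, k = 0 ∨ k = partner π 0 ∨ k = ![2, 1, 1] π ∨
      k = partner π (![2, 1, 1] π) := by decide
  funext k
  rcases representatives π k with rfl | rfl | rfl | rfl
  · exact h₀
  · rw [hi, hj, h₀]
  · exact h₁
  · rw [hi, hj, h₁]

theorem IsPaired.eq_apply_zero {π ρ : Fin 3} (hne : π ≠ ρ) {i : Fin 4 → I} (hπ : IsPaired π i)
    (hρ : IsPaired ρ i) (k : Fin 4) : i k = i 0 := by
  have transitive : ∀ π ρ, π ≠ ρ → ∀ k, k = 0 ∨ k = partner π 0 ∨ k = partner ρ 0 ∨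
      k = partner π (partner ρ 0) := by decide
  rcases transitive π ρ hne k with rfl | rfl | rfl | rfl
  · rfl
  · exact hπ 0
  · exact hρ 0
  · rw [hπ, hρ]

variable [Fintype J] [DecidableEq J]

theorem card_isPaired_le (π : Fin 3) :
    (Finset.univ.filter fun j : Fin 4 → J => IsPaired π j).card ≤ Fintype.card J ^ 2 := by
  rw [sq, ← Fintype.card_prod]
  refine Finset.card_le_card_of_injOn (fun j => (j 0, j (![2, 1, 1] π)))
    (fun _ _ => Finset.mem_univ _) fun i hi j hj hij => ?_
  simp only [Finset.coe_filter, Finset.mem_univ, true_and, Set.mem_ofPred_eq] at hi hj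
  exact hi.ext hj (congrArg Prod.fst hij) (congrArg Prod.snd hij)

theorem card_isPaired_and_isPaired_le {π ρ : Fin 3} (hne : π ≠ ρ) :
    (Finset.univ.filter fun j : Fin 4 → J => IsPaired π j ∧ IsPaired ρ j).card ≤
      Fintype.card J := by
  refine Finset.card_le_card_of_injOn (fun j => j 0) (fun _ _ => Finset.mem_univ _)
    fun i hi j hj hij => ?_
  simp only [Finset.coe_filter, Finset.mem_univ, true_and, Set.mem_ofPred_eq] at hi hj
  funext k
  rw [hi.1.eq_apply_zero hne hi.2, hj.1.eq_apply_zero hne hj.2]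
  exact hij

theorem sum_isPaired_pairingTensor (α : Fin 3 → ℝ) (π : Fin 3) :
    (∑ j : Fin 4 → J, if IsPaired π j then pairingTensor α j else 0) =
      ∑ ρ, (Finset.univ.filter fun j : Fin 4 → J => IsPaired π j ∧ IsPaired ρ j).card * α ρ := by
  simp only [pairingTensor, Finset.natCast_card_filter, Finset.sum_mul, ite_mul, one_mul, zero_mul]
  rw [Finset.sum_comm]
  refine Finset.sum_congr rfl fun j _ => ?_
  split_ifs with h <;> simp [h]

theorem layerContraction_of_not_isPaired [DecidableEq C] {c : Fin 4 → C} {π : Fin 3}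
    (h : ¬ IsPaired π c) (T : (Fin 4 → J) → ℝ) :
    layerContraction c T π = 0 :=
  if_neg h

theorem abs_layerContraction_le [DecidableEq C] (c : Fin 4 → C) (T : (Fin 4 → J) → ℝ) (π : Fin 3) :
    |layerContraction c T π| ≤ ∑ j, |T j| := by
  unfold layerContraction
  split_ifs
  · refine (Finset.abs_sum_le_sum_abs _ _).trans (Finset.sum_le_sum fun j _ => ?_)
    split_ifs <;> simp
  · rw [abs_zero]; positivity

theorem mul_abs_layerContraction_pairingTensor_le [DecidableEq C] {c : Fin 4 → C} {α : Fin 3 → ℝ}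
    {π : Fin 3} {M u : ℝ} (hu : 0 ≤ u) (hJ : u ≤ Fintype.card J) (hα : ∀ ρ, |α ρ| ≤ M)
    (hπ : u * |α π| ≤ M) :
    u * |layerContraction c (pairingTensor α : (Fin 4 → J) → ℝ) π| ≤
      3 * Fintype.card J ^ 2 * M := by
  have hM : 0 ≤ M := (abs_nonneg _).trans (hα 0)
  have term_le (ρ : Fin 3) : u * |((Finset.univ.filter fun j : Fin 4 → J =>
      IsPaired π j ∧ IsPaired ρ j).card : ℝ) * α ρ| ≤ Fintype.card J ^ 2 * M := by
    rw [abs_mul, Nat.abs_cast]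
    rcases eq_or_ne π ρ with rfl | hne
    · rw [mul_left_comm]
      simp only [and_self]
      gcongr
      exact_mod_cast card_isPaired_le π
    · rw [sq, mul_assoc]
      gcongr
      · exact_mod_cast card_isPaired_and_isPaired_le hne
      · exact hα ρ
  unfold layerContraction
  split_ifs
  · rw [sum_isPaired_pairingTensor]
    calc _ ≤ u * ∑ ρ, |((Finset.univ.filter fun j : Fin 4 → J =>
          IsPaired π j ∧ IsPaired ρ j).card : ℝ) * α ρ| := by
          gcongr; exact Finset.abs_sum_le_sum_abs _ _
      _ ≤ ∑ _ρ : Fin 3, (Fintype.card J : ℝ) ^ 2 * M := by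
          rw [Finset.mul_sum]; exact Finset.sum_le_sum fun ρ _ => term_le ρ
      _ = _ := by simp [mul_assoc]
  · rw [abs_zero, mul_zero]; positivity

end PairingTensor

theorem integral_prod_layer_mixCopies {P L C I J : Type*} [Fintype P] [Fintype C]
    [DecidableEq C] [Fintype J] [DecidableEq I] [DecidableEq J] [DecidableEq L]
    {layer : P → L} {s : Finset L} {l : L} (hl : l ∉ s) {w : I × J → P} (hw : Function.Injective w)
    (hlayer : ∀ ij, layer (w ij) = l) {g : Fin 4 → J → (P → ℝ) → ℝ}
    (hg : ∀ k j, IsMultilinearOn layer s (g k j)) (B : Fin 4 → L → C) (i : Fin 4 → I) :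
    ∫ z, ∏ k, ∑ j, mixCopies layer (B k) z (w (i k, j)) * g k j (mixCopies layer (B k) z)
        ∂gaussianPi (C × P) =
      pairingTensor (layerContraction (fun k => B k l) fun j =>
        ∫ z, ∏ k, g k (j k) (mixCopies layer (B k) z) ∂gaussianPi (C × P)) i := by
  classical
  have disjoint : Disjoint {q : C × P | layer q.2 = l} {q | layer q.2 ∈ s} :=
    Set.disjoint_left.2 fun q hq hq' => hl (hq ▸ hq')
  have dependsOn (k j) : DependsOn (fun z => g k j (mixCopies layer (B k) z))
      {q : C × P | layer q.2 ∈ s} := fun z z' h => (hg k j).dependsOn fun p hp => h _ hp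
  have moments (k j) : HasFiniteMoments (fun z => g k j (mixCopies layer (B k) z))
      (gaussianPi (C × P)) :=
    (hg k j).hasFiniteMoments.comp_measurePreserving (measurePreserving_mixCopies _)
  have isPaired_iff (π : Fin 3) (j : Fin 4 → J) :
      IsPaired π (fun k => (B k (layer (w (i k, j k))), w (i k, j k))) ↔
        IsPaired π i ∧ IsPaired π (fun k => B k l) ∧ IsPaired π j := by
    simp only [hlayer, isPaired_prod_iff, isPaired_comp_iff hw]
    exact and_left_comm
  refine (integral_prod_sum_mul_gaussianPi disjoint (fun k j => hlayer (i k, j))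
    dependsOn moments (e := fun k j => (B k (layer (w (i k, j))), w (i k, j)))).trans ?_
  simp only [isPaired_iff, pairingTensor, layerContraction, Finset.natCast_card_filter,
    Finset.sum_mul, ite_mul, one_mul, zero_mul, ite_and]
  rw [Finset.sum_comm]
  refine Finset.sum_congr rfl fun π _ => ?_
  split_ifs <;> simp

section Network

variable {d0 d n m : ℕ} {C : Type*}

/-- The layer of a parameter: the entries of `W^(ℓ+1)` form layer `ℓ`, those of `v` layer `d`. -/
def paramLayer : Param d0 d n → ℕ
  | .inl _ => d
  | .inr (.inl _) => 0
  | .inr (.inr (l, _, _)) => l + 1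

theorem hidden_succ (hm : m < d - 1) (θ : Param d0 d n → ℝ) (x : Fin d0 → ℝ) (i : Fin n) :
    hidden d0 d n θ x (m + 1) i =
      ∑ j, θ (.inr (.inr (⟨m, hm⟩, i, j))) * hidden d0 d n θ x m j := by
  simp [hidden, hm]

theorem isMultilinearOn_hidden (hm : m ≤ d - 1) (x : Fin d0 → ℝ) (i : Fin n) :
    IsMultilinearOn paramLayer (.range (m + 1)) fun θ => hidden d0 d n θ x m i := by
  induction m generalizing i with
  | zero =>
    exact .sum_coord_mul (Finset.notMem_empty 0)
      (w := fun j => (.inr (.inl (i, j)) : Param d0 d n)) (fun _ => rfl) fun j => .const (x j)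
  | succ m ih =>
    simp only [hidden_succ hm, Finset.range_add_one (n := m + 1)]
    exact .sum_coord_mul Finset.notMem_range_self
      (w := fun j => .inr (.inr (⟨m, hm⟩, i, j))) (fun _ => rfl) (ih (Nat.le_of_succ_le hm))

theorem isMultilinearOn_net (hd : 1 ≤ d) (x : Fin d0 → ℝ) :
    IsMultilinearOn paramLayer (.range (d + 1)) fun θ => net d0 d n θ x := by
  have readout : IsMultilinearOn paramLayer (insert d (.range d)) fun θ : Param d0 d n → ℝ =>
      ∑ i, θ (.inl i) * hidden d0 d n θ x (d - 1) i :=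
    .sum_coord_mul Finset.notMem_range_self (w := Sum.inl) (fun _ => rfl) fun i => by
      simpa only [Nat.sub_add_cancel hd] using isMultilinearOn_hidden (d := d) le_rfl x i
  simpa only [net, Finset.empty_union, ← Finset.range_add_one] using
    (IsMultilinearOn.const _).mul readout (Finset.disjoint_empty_left _)

/-- The coefficients of the pairing tensor of the fourth moments of the `m`-th hidden layer, for the
inputs `X` and the copies of the weights chosen by `B`; for `m = d` those of the readout. -/
def pairingCoeff [DecidableEq C] (n : ℕ) (X : Fin 4 → Fin d0 → ℝ) (B : Fin 4 → ℕ → C) :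
    ℕ → Fin 3 → ℝ
  | 0 => layerContraction (fun k => B k 0) fun j => ∏ k, X k (j k)
  | m + 1 => layerContraction (fun k => B k (m + 1))
      (pairingTensor (pairingCoeff n X B m) : (Fin 4 → Fin n) → ℝ)

theorem integral_prod_hidden_mixCopies [Fintype C] [DecidableEq C] (hm : m ≤ d - 1)
    (X : Fin 4 → Fin d0 → ℝ) (B : Fin 4 → ℕ → C) (i : Fin 4 → Fin n) :
    ∫ z, ∏ k, hidden d0 d n (mixCopies paramLayer (B k) z) (X k) m (i k)
        ∂gaussianPi (C × Param d0 d n) = pairingTensor (pairingCoeff n X B m) i := by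
  induction m generalizing i with
  | zero =>
    refine (integral_prod_layer_mixCopies (Finset.notMem_empty 0)
      (w := fun ij => (.inr (.inl ij) : Param d0 d n)) (Sum.inr_injective.comp Sum.inl_injective)
      (fun _ => rfl) (fun k j => .const (X k j)) B i).trans ?_
    simp [pairingCoeff]
  | succ m ih =>
    have hm' : m ≤ d - 1 := Nat.le_of_succ_le hm
    simp only [hidden_succ hm]
    refine (integral_prod_layer_mixCopies Finset.notMem_range_self
      (w := fun ij => (.inr (.inr (⟨m, hm⟩, ij)) : Param d0 d n)) ?_
      (fun _ => rfl) (fun k j => isMultilinearOn_hidden hm' (X k) j) B i).trans ?_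
    · exact Sum.inr_injective.comp (Sum.inr_injective.comp (Prod.mk_right_injective _))
    · simp only [ih hm', pairingCoeff]

theorem integral_prod_net_mixCopies [Fintype C] [DecidableEq C] (hd : 1 ≤ d)
    (X : Fin 4 → Fin d0 → ℝ) (B : Fin 4 → ℕ → C) :
    ∫ z, ∏ k, net d0 d n (mixCopies paramLayer (B k) z) (X k) ∂gaussianPi (C × Param d0 d n) =
      ((n : ℝ) ^ d * d0)⁻¹ ^ 2 * ∑ π, pairingCoeff n X B d π := by
  obtain ⟨m, rfl⟩ := Nat.exists_eq_add_of_le' hd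
  have readout := integral_prod_layer_mixCopies Finset.notMem_range_self
    (w := fun ui : Unit × Fin n => (.inl ui.2 : Param d0 (m + 1) n))
    (fun _ _ h => Prod.ext rfl (Sum.inl_injective h)) (fun _ => rfl)
    (fun k j => isMultilinearOn_hidden le_rfl (X k) j) B fun _ => ()
  simp only [integral_prod_hidden_mixCopies le_rfl] at readout
  have normalization : (√((n : ℝ) ^ (m + 1) * d0))⁻¹ ^ 4 = ((n : ℝ) ^ (m + 1) * d0)⁻¹ ^ 2 := by
    rw [show 4 = 2 * 2 from rfl, pow_mul, inv_pow, Real.sq_sqrt (by positivity)]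
  simp only [net, Finset.prod_mul_distrib, Finset.prod_const, Finset.card_univ, Fintype.card_fin,
    integral_const_mul, normalization]
  refine congrArg _ (readout.trans ?_)
  exact Finset.sum_congr rfl fun π _ => if_pos fun _ => rfl

theorem abs_pairingCoeff_le [DecidableEq C] (hn : 1 ≤ n) (X : Fin 4 → Fin d0 → ℝ)
    (B : Fin 4 → ℕ → C) (m : ℕ) (π : Fin 3) :
    |pairingCoeff n X B m π| ≤ (3 * n ^ 2) ^ m * ∏ k, ∑ j, |X k j| := by
  induction m generalizing π with
  | zero =>
    simpa [pairingCoeff, Finset.prod_univ_sum, Finset.abs_prod] using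
      abs_layerContraction_le (fun k => B k 0) (fun j => ∏ k, X k (j k)) π
  | succ m ih =>
    have bound := mul_abs_layerContraction_pairingTensor_le (J := Fin n) (c := fun k => B k (m + 1))
      zero_le_one (by simpa using hn) ih ((one_mul _).trans_le (ih π))
    simpa only [pairingCoeff, one_mul, Fintype.card_fin, pow_succ' (3 * (n : ℝ) ^ 2), mul_assoc]
      using bound

theorem mul_abs_pairingCoeff_le [DecidableEq C] (hn : 1 ≤ n) (X : Fin 4 → Fin d0 → ℝ)
    {B : Fin 4 → ℕ → C} {π : Fin 3} (hπ : ∃ l ∈ Finset.range (m + 1), ¬ IsPaired π fun k => B k l) :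
    n * |pairingCoeff n X B m π| ≤ (3 * n ^ 2) ^ m * ∏ k, ∑ j, |X k j| := by
  induction m with
  | zero =>
    rw [pairingCoeff, layerContraction_of_not_isPaired (by simpa using hπ), abs_zero, mul_zero]
    positivity
  | succ m ih =>
    by_cases hm : IsPaired π fun k => B k (m + 1)
    · have hπ' : ∃ l ∈ Finset.range (m + 1), ¬ IsPaired π fun k => B k l := by
        obtain ⟨l, hl, hl'⟩ := hπ
        rw [Finset.range_add_one, Finset.mem_insert] at hl
        exact ⟨l, hl.resolve_left fun h => hl' (h ▸ hm), hl'⟩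
      have bound := mul_abs_layerContraction_pairingTensor_le (J := Fin n)
        (c := fun k => B k (m + 1))
        n.cast_nonneg (by simp) (abs_pairingCoeff_le hn X B m) (ih hπ')
      simpa only [pairingCoeff, Fintype.card_fin, pow_succ' (3 * (n : ℝ) ^ 2), mul_assoc]
        using bound
    · rw [pairingCoeff, layerContraction_of_not_isPaired hm, abs_zero, mul_zero]
      positivity

theorem mul_abs_integral_prod_net_mixCopies_le [Fintype C] (hd : 1 ≤ d) (hn : 1 ≤ n)
    (X : Fin 4 → Fin d0 → ℝ) {B : Fin 4 → ℕ → C}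
    (hB : ∀ π, ∃ l ∈ Finset.range (d + 1), ¬ IsPaired π fun k => B k l) :
    n * |∫ z, ∏ k, net d0 d n (mixCopies paramLayer (B k) z) (X k)
        ∂gaussianPi (C × Param d0 d n)| ≤ 3 ^ (d + 1) * ∏ k, ∑ j, |X k j| := by
  classical
  set A := ∏ k, ∑ j, |X k j|
  have sum_le : n * |∑ π, pairingCoeff n X B d π| ≤ 3 * ((3 * n ^ 2) ^ d * A) := by
    calc n * |∑ π, pairingCoeff n X B d π|
      _ ≤ n * ∑ π, |pairingCoeff n X B d π| := by gcongr; exact Finset.abs_sum_le_sum_abs _ _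
      _ ≤ ∑ _π : Fin 3, (3 * n ^ 2) ^ d * A := by
          rw [Finset.mul_sum]
          exact Finset.sum_le_sum fun π _ => mul_abs_pairingCoeff_le hn X (hB π)
      _ = 3 * ((3 * n ^ 2) ^ d * A) := by simp
  rw [integral_prod_net_mixCopies hd, abs_mul, abs_of_nonneg (by positivity), mul_left_comm]
  calc (((n : ℝ) ^ d * d0)⁻¹) ^ 2 * (n * |∑ π, pairingCoeff n X B d π|)
    _ ≤ (((n : ℝ) ^ d * d0)⁻¹) ^ 2 * (3 * ((3 * n ^ 2) ^ d * A)) := by gcongr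
    _ = (d0 : ℝ)⁻¹ ^ 2 * (3 ^ (d + 1) * A) := by
        rw [mul_inv, mul_pow, mul_pow (3 : ℝ), ← pow_mul, inv_pow, ← pow_mul, mul_comm d 2]
        field_simp
        ring
    _ ≤ 3 ^ (d + 1) * A := mul_le_of_le_one_left (by positivity)
        (pow_le_one₀ (by positivity) (Nat.cast_inv_le_one d0))

end Network

/-- the correlation function appearing in `E_θ[dΘ/dt]` for a deep linear
fully connected network is `O(1/n)`. -/
theorem deep_linear_fc_dNTK_correlator (d0 d : ℕ) (hd0 : 0 < d0) (hd : 1 ≤ d)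
    (x₁ x₂ x₃ x₄ : Fin d0 → ℝ) :
    ∃ K : ℝ, ∀ n : ℕ, 1 ≤ n →
      |corrDTheta d0 d n x₁ x₂ x₃ x₄| ≤ K / (n : ℝ) := by
  let X := ![x₁, x₂, x₃, x₄]
  let pairs := (Finset.range (d + 1)).offDiag
  refine ⟨pairs.card * (3 ^ (d + 1) * ∏ k, ∑ j, |X k j|), fun n hn => ?_⟩
  let term (ab : ℕ × ℕ) : ℝ :=
    ∫ z, ∏ k, net d0 d n (mixCopies paramLayer (copyPattern ab.1 ab.2 k) z) (X k)
      ∂gaussianPi (Fin 3 × Param d0 d n)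
  have eq_sum : corrDTheta d0 d n x₁ x₂ x₃ x₄ = ∑ ab ∈ pairs, term ab :=
    integral_iteratedFDeriv_mul_fderiv_mul_fderiv (F := fun k θ => net d0 d n θ (X k))
      fun k => isMultilinearOn_net hd (X k)
  have term_le : ∀ ab ∈ pairs, n * |term ab| ≤ 3 ^ (d + 1) * ∏ k, ∑ j, |X k j| := fun ab hab =>
    mul_abs_integral_prod_net_mixCopies_le hd hn X (exists_not_isPaired_copyPattern hab)
  rw [le_div_iff₀' (by positivity), eq_sum]
  calc n * |∑ ab ∈ pairs, term ab|
    _ ≤ n * ∑ ab ∈ pairs, |term ab| := by gcongr; exact Finset.abs_sum_le_sum_abs _ _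
    _ ≤ pairs.card * (3 ^ (d + 1) * ∏ k, ∑ j, |X k j|) := by
        rw [Finset.mul_sum, ← nsmul_eq_mul]; exact Finset.sum_le_card_nsmul _ _ _ term_le

end DeepLinearFC
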